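/- For each n, let Q_n be an n×n symmetric matrix with zero diagonal and let X ~ P_{β_1,Q_n} be an Ising random vector whose squared sample mean satisfies X̄_n² → m_1² in probability for some constant m_1 ∈ [0,1). Let Y ~ P_{β_2,Q^{CW}} be a Curie–Weiss Ising vector with β_2 ≥ 0, independent of X. Then (1/n) Σ_{i=1}^n (X_i − X̄_n)² → 1 − m_1² in probability, and √n · T_n converges in distribution to N(0, (1−m_1²)(1−m(β_2)²)). -/

import Mathlib

open MeasureTheory ProbabilityTheory Filter Topology Matrix

noncomputable section

/-- The `±1` configuration associated to a boolean configuration. -/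
def pmVec {ι : Type*} (s : ι → Bool) : ι → ℝ := fun i => if s i then 1 else -1

/-- Unnormalized Ising weight `exp((β/2) zᵀ Q z)`. -/
def isingWeight {ι : Type*} [Fintype ι] (β : ℝ) (Q : Matrix ι ι ℝ) (z : ι → ℝ) : ℝ :=
  Real.exp (β / 2 * (z ⬝ᵥ Q.mulVec z))

/-- Ising partition function `Z(β,Q)`. -/
def isingZ (ι : Type*) [Fintype ι] [DecidableEq ι] (β : ℝ) (Q : Matrix ι ι ℝ) : ℝ :=
  ∑ s : ι → Bool, isingWeight β Q (pmVec s)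

/-- The Ising probability measure `P_{β,Q}` on `{±1}^ι ⊆ ℝ^ι`:
`P(z) = exp((β/2) zᵀQz) / Z(β,Q)`. -/
def isingMeasure (ι : Type*) [Fintype ι] [DecidableEq ι] (β : ℝ) (Q : Matrix ι ι ℝ) :
    Measure (ι → ℝ) :=
  ∑ s : ι → Bool,
    ENNReal.ofReal (isingWeight β Q (pmVec s) / isingZ ι β Q) • Measure.dirac (pmVec s)

/-- Sample mean `X̄ = (1/n) Σ_i X_i`. -/
def sampleMean {ι : Type*} [Fintype ι] (x : ι → ℝ) : ℝ := (∑ i, x i) / (Fintype.card ι : ℝ)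

/-- Sample covariance `T_n = (1/n) Σ_i (X_i - X̄)(Y_i - Ȳ)`. -/
def sampleCov {ι : Type*} [Fintype ι] (x y : ι → ℝ) : ℝ :=
  (∑ i, (x i - sampleMean x) * (y i - sampleMean y)) / (Fintype.card ι : ℝ)

/-- Convergence in distribution: weak convergence of the laws, tested against
bounded continuous functions. -/
def TendstoInDistribution (μ : ℕ → Measure ℝ) (ν : Measure ℝ) : Prop :=
  ∀ f : BoundedContinuousFunction ℝ ℝ,
    Tendsto (fun n => ∫ x, f x ∂(μ n)) atTop (𝓝 (∫ x, f x ∂ν))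

/-- The Curie–Weiss interaction matrix `Q^{CW} = (1/n)(11ᵀ - I)`. -/
def QCW (n : ℕ) : Matrix (Fin n) (Fin n) ℝ := fun i j => if i = j then 0 else (n : ℝ)⁻¹

/-- `m(β)`: equal to `0` for `β ≤ 1`, and to the unique positive root of
`m = tanh(β m)` for `β > 1`. -/
def isingMag (β : ℝ) : ℝ := sSup {m : ℝ | 0 ≤ m ∧ m = Real.tanh (β * m)}


/-- Convergence in probability to a constant, for a sequence of laws on `ℝ`. -/
def TendstoInProbability (μ : ℕ → Measure ℝ) (c : ℝ) : Prop :=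
  ∀ ε : ℝ, 0 < ε → Tendsto (fun n => μ n {x | ε ≤ |x - c|}) atTop (𝓝 0)

/-! ### Elementary estimates on products of characteristic functions -/

lemma factor_bound (x θ : ℝ) (hx : |x| ≤ 1) (hθ : |θ| ≤ 1) :
    ‖((Real.cos x : ℂ) + Complex.I * θ * Real.sin x)
      - Complex.exp (Complex.I * θ * x - (1 - θ ^ 2) * x ^ 2 / 2)‖ ≤ 100 * |x| ^ 3 := by
  set w : ℂ := Complex.I * θ * x - (1 - θ ^ 2) * x ^ 2 / 2 with hw
  have hx0 := abs_nonneg x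
  have hθ2 : θ ^ 2 ≤ 1 := (sq_le_one_iff_abs_le_one θ).2 hθ
  have hn1 : ‖(((1 - θ ^ 2) * x ^ 2 / 2 : ℝ) : ℂ)‖ ≤ |x| / 2 := by
    rw [Complex.norm_real, Real.norm_eq_abs, abs_of_nonneg (by nlinarith [sq_nonneg x])]
    nlinarith [sq_nonneg x, sq_nonneg θ, sq_abs x]
  have hwn : ‖w‖ ≤ 3 / 2 * |x| := by
    have h1 : ‖Complex.I * θ * x‖ ≤ |x| := by
      simp only [norm_mul, Complex.norm_I, Complex.norm_real, Real.norm_eq_abs, one_mul]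
      nlinarith
    have : w = Complex.I * θ * x - (((1 - θ ^ 2) * x ^ 2 / 2 : ℝ) : ℂ) := by
      rw [hw]; push_cast; ring
    rw [this]
    refine (norm_sub_le _ _).trans ?_
    linarith
  have he := Complex.norm_exp_sub_sum_le_norm_mul_exp w 3
  have hexp : Real.exp ‖w‖ ≤ 9 := by
    have : Real.exp ‖w‖ ≤ Real.exp 2 := Real.exp_le_exp.2 (by linarith)
    have h2 : Real.exp 2 = Real.exp 1 ^ 2 := by rw [← Real.exp_nat_mul]; norm_num
    have := Real.exp_one_lt_d9
    have := Real.exp_pos 1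
    nlinarith
  have hw3 : ‖w‖ ^ 3 ≤ (3 / 2 * |x|) ^ 3 := pow_le_pow_left₀ (norm_nonneg _) hwn 3
  have he' : ‖Complex.exp w - (1 + w + w ^ 2 / 2)‖ ≤ 40 * |x| ^ 3 := by
    have hs : ∑ m ∈ Finset.range 3, w ^ m / (m.factorial : ℂ) = 1 + w + w ^ 2 / 2 := by
      simp [Finset.sum_range_succ, Nat.factorial]
    rw [hs] at he
    refine he.trans ?_
    have : 0 ≤ ‖w‖ ^ 3 := by positivity
    nlinarith [Real.exp_pos ‖w‖, pow_nonneg hx0 3]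
  have hc := Real.cos_bound hx
  have hs := Real.sin_bound hx
  have hx4 : |x| ^ 4 ≤ |x| ^ 3 := pow_le_pow_of_le_one hx0 hx (by norm_num)
  have hx5 : |x| ^ 5 ≤ |x| ^ 3 := pow_le_pow_of_le_one hx0 hx (by norm_num)
  have hx3 : 0 ≤ |x| ^ 3 := by positivity
  have hs' : |Real.sin x - x| ≤ |x| ^ 3 := by
    have : Real.sin x - x = (Real.sin x - (x - x ^ 3 / 6)) - x ^ 3 / 6 := by ring
    rw [this]
    refine (abs_sub _ _).trans ?_
    rw [abs_div, abs_pow]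
    norm_num
    linarith
  have hk : |(1 - θ ^ 2)| ≤ 1 := by rw [abs_le]; constructor <;> nlinarith [sq_nonneg θ]
  have key : ((Real.cos x : ℂ) + Complex.I * θ * Real.sin x) - Complex.exp w
      = (((Real.cos x - (1 - x ^ 2 / 2) : ℝ) : ℂ))
        + Complex.I * ((θ * (Real.sin x - x) : ℝ) : ℂ)
        + Complex.I * ((θ * (1 - θ ^ 2) * x ^ 3 / 2 : ℝ) : ℂ)
        - (((1 - θ ^ 2) ^ 2 * x ^ 4 / 8 : ℝ) : ℂ)
        - (Complex.exp w - (1 + w + w ^ 2 / 2)) := by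
    rw [hw]; push_cast; ring_nf; simp only [Complex.I_sq]; ring
  rw [key]
  have a1 : ‖(((Real.cos x - (1 - x ^ 2 / 2) : ℝ) : ℂ))‖ ≤ |x| ^ 3 := by
    rw [Complex.norm_real, Real.norm_eq_abs]; linarith
  have a2 : ‖Complex.I * ((θ * (Real.sin x - x) : ℝ) : ℂ)‖ ≤ |x| ^ 3 := by
    rw [norm_mul, Complex.norm_I, one_mul, Complex.norm_real, Real.norm_eq_abs, abs_mul]
    calc |θ| * |Real.sin x - x| ≤ 1 * |x| ^ 3 := by gcongr
      _ = _ := one_mul _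
  have a3 : ‖Complex.I * ((θ * (1 - θ ^ 2) * x ^ 3 / 2 : ℝ) : ℂ)‖ ≤ |x| ^ 3 := by
    rw [norm_mul, Complex.norm_I, one_mul, Complex.norm_real, Real.norm_eq_abs, abs_div, abs_mul,
      abs_mul, abs_pow]
    calc |θ| * |1 - θ ^ 2| * |x| ^ 3 / |2| ≤ 1 * 1 * |x| ^ 3 / 2 := by
          rw [abs_two]; gcongr
      _ ≤ _ := by linarith
  have a4 : ‖(((1 - θ ^ 2) ^ 2 * x ^ 4 / 8 : ℝ) : ℂ)‖ ≤ |x| ^ 3 := by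
    rw [Complex.norm_real, Real.norm_eq_abs, abs_div, abs_mul, abs_pow, abs_pow]
    calc |1 - θ ^ 2| ^ 2 * |x| ^ 4 / |8| ≤ 1 ^ 2 * |x| ^ 3 / 8 := by
          rw [abs_of_pos (by norm_num : (0:ℝ) < 8)]; gcongr
      _ ≤ _ := by linarith
  refine (norm_sub_le _ _).trans ?_
  have b1 := norm_sub_le ((((Real.cos x - (1 - x ^ 2 / 2) : ℝ) : ℂ))
        + Complex.I * ((θ * (Real.sin x - x) : ℝ) : ℂ)
        + Complex.I * ((θ * (1 - θ ^ 2) * x ^ 3 / 2 : ℝ) : ℂ))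
        ((((1 - θ ^ 2) ^ 2 * x ^ 4 / 8 : ℝ) : ℂ))
  have b2 := norm_add₃_le (a := (((Real.cos x - (1 - x ^ 2 / 2) : ℝ) : ℂ)))
        (b := Complex.I * ((θ * (Real.sin x - x) : ℝ) : ℂ))
        (c := Complex.I * ((θ * (1 - θ ^ 2) * x ^ 3 / 2 : ℝ) : ℂ))
  linarith

lemma norm_factor_le (x θ : ℝ) (hθ : |θ| ≤ 1) :
    ‖((Real.cos x : ℂ) + Complex.I * θ * Real.sin x)‖ ≤ 1 := by
  have hθ2 : θ ^ 2 ≤ 1 := (sq_le_one_iff_abs_le_one θ).2 hθ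
  have h : ((Real.cos x : ℂ) + Complex.I * θ * Real.sin x)
      = ((Real.cos x : ℝ) : ℂ) + ((θ * Real.sin x : ℝ) : ℂ) * Complex.I := by
    push_cast; ring
  rw [h, Complex.norm_add_mul_I]
  refine Real.sqrt_le_one.2 ?_
  nlinarith [Real.sin_sq_add_cos_sq x, sq_nonneg (Real.sin x)]

lemma norm_prod_sub_prod_le' {ι : Type*} (s : Finset ι) (a b : ι → ℂ)
    (ha : ∀ i, ‖a i‖ ≤ 1) (hb : ∀ i, ‖b i‖ ≤ 1) :
    ‖∏ i ∈ s, a i - ∏ i ∈ s, b i‖ ≤ ∑ i ∈ s, ‖a i - b i‖ := by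
  classical
  induction s using Finset.induction_on with
  | empty => simp
  | insert j s hj ih =>
    rw [Finset.prod_insert hj, Finset.prod_insert hj, Finset.sum_insert hj]
    have h : a j * ∏ i ∈ s, a i - b j * ∏ i ∈ s, b i
        = (a j - b j) * ∏ i ∈ s, a i + b j * (∏ i ∈ s, a i - ∏ i ∈ s, b i) := by ring
    rw [h]
    refine (norm_add_le _ _).trans ?_
    rw [norm_mul, norm_mul]
    have hp : ‖∏ i ∈ s, a i‖ ≤ 1 := by
      rw [norm_prod]; exact Finset.prod_le_one (fun _ _ => norm_nonneg _) (fun i _ => ha i)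
    have h1 : ‖a j - b j‖ * ‖∏ i ∈ s, a i‖ ≤ ‖a j - b j‖ :=
      mul_le_of_le_one_right (norm_nonneg _) hp
    have h2 : ‖b j‖ * ‖∏ i ∈ s, a i - ∏ i ∈ s, b i‖ ≤ ‖∏ i ∈ s, a i - ∏ i ∈ s, b i‖ :=
      mul_le_of_le_one_left (norm_nonneg _) (hb j)
    linarith

/-- The conditional characteristic function. -/
def condChar {n : ℕ} (d : Fin n → ℝ) (θ : ℝ) : ℂ :=
  ∏ j, ((Real.cos (d j) : ℂ) + Complex.I * θ * Real.sin (d j))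

lemma norm_condChar_le {n : ℕ} (d : Fin n → ℝ) (θ : ℝ) (hθ : |θ| ≤ 1) :
    ‖condChar d θ‖ ≤ 1 := by
  rw [condChar, norm_prod]
  exact Finset.prod_le_one (fun _ _ => norm_nonneg _) (fun i _ => norm_factor_le _ _ hθ)

lemma condChar_bound {n : ℕ} (d : Fin n → ℝ) (θ r : ℝ) (hθ : |θ| ≤ 1) (hr : r ≤ 1)
    (hd : ∀ j, |d j| ≤ r) (hsum : ∑ j, d j = 0) :
    ‖condChar d θ - (Real.exp (-((1 - θ ^ 2) * (∑ j, d j ^ 2) / 2)) : ℂ)‖ ≤ 100 * n * r ^ 3 := by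
  have hθ2 : θ ^ 2 ≤ 1 := (sq_le_one_iff_abs_le_one θ).2 hθ
  have hprod : (Real.exp (-((1 - θ ^ 2) * (∑ j, d j ^ 2) / 2)) : ℂ)
      = ∏ j, Complex.exp (Complex.I * θ * d j - (1 - θ ^ 2) * (d j) ^ 2 / 2) := by
    rw [← Complex.exp_sum, Finset.sum_sub_distrib, ← Finset.mul_sum, ← Finset.sum_div,
      ← Finset.mul_sum, ← Complex.ofReal_sum, hsum]
    push_cast
    simp
  rw [hprod, condChar]
  refine (norm_prod_sub_prod_le' _ _ _ (fun i => norm_factor_le _ _ hθ) ?_).trans ?_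
  · intro i
    rw [Complex.norm_exp, Real.exp_le_one_iff]
    have : (Complex.I * θ * d i - (1 - θ ^ 2) * (d i) ^ 2 / 2 : ℂ)
        = ((-((1 - θ ^ 2) * (d i) ^ 2 / 2) : ℝ) : ℂ) + ((θ * d i : ℝ) : ℂ) * Complex.I := by
      push_cast; ring
    rw [this, Complex.add_re, Complex.re_ofReal_mul, Complex.ofReal_re, Complex.I_re, mul_zero, add_zero]
    nlinarith [sq_nonneg (d i)]
  · refine (Finset.sum_le_sum (fun i _ => (factor_bound (d i) θ ((hd i).trans hr) hθ).trans
      (mul_le_mul_of_nonneg_left (pow_le_pow_left₀ (abs_nonneg _) (hd i) 3) (by norm_num)))).trans ?_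
    simp
    linarith

lemma abs_exp_neg_sub_le {a b : ℝ} (ha : 0 ≤ a) (hb : 0 ≤ b) :
    |Real.exp (-a) - Real.exp (-b)| ≤ |a - b| := by
  wlog h : a ≤ b generalizing a b
  · rw [abs_sub_comm, abs_sub_comm a]; exact this hb ha (le_of_not_ge h)
  rw [abs_of_nonneg (sub_nonneg.2 (Real.exp_le_exp.2 (by linarith))),
    abs_sub_comm, abs_of_nonneg (sub_nonneg.2 h)]
  have h1 : Real.exp (-b) = Real.exp (-a) * Real.exp (-(b - a)) := by
    rw [← Real.exp_add]; ring_nf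
  have h2 := Real.add_one_le_exp (-(b - a))
  have h3 : Real.exp (-a) ≤ 1 := Real.exp_le_one_iff.2 (by linarith)
  have h4 := Real.exp_pos (-a)
  have h5 : Real.exp (-(b - a)) ≤ 1 := Real.exp_le_one_iff.2 (by linarith)
  nlinarith

lemma continuous_condChar {n : ℕ} (d : Fin n → ℝ) : Continuous (condChar d) := by
  unfold condChar; fun_prop

lemma mixture_bound {n : ℕ} (ρ : Measure ℝ) [IsProbabilityMeasure ρ] (θ : ℝ → ℝ)
    (hθm : Continuous θ) (hθ : ∀ t, |θ t| ≤ 1) (M : ℝ) (hM1 : M ≤ 1)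
    (d : Fin n → ℝ) (r : ℝ) (hr : r ≤ 1)
    (hd : ∀ j, |d j| ≤ r) (hsum : ∑ j, d j = 0) :
    ‖∫ t, condChar d (θ t) ∂ρ - (Real.exp (-((1 - M) * (∑ j, d j ^ 2) / 2)) : ℂ)‖
      ≤ 100 * n * r ^ 3 + (∑ j, d j ^ 2) / 2 * ∫ t, |θ t ^ 2 - M| ∂ρ := by
  set D := ∑ j, d j ^ 2 with hD
  have hD0 : 0 ≤ D := Finset.sum_nonneg (fun _ _ => sq_nonneg _)
  have hi1 : Integrable (fun t => condChar d (θ t)) ρ := by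
    refine Integrable.of_bound (C := 1)
      ((continuous_condChar d).comp hθm).aestronglyMeasurable ?_
    exact ae_of_all _ fun t => norm_condChar_le _ _ (hθ t)
  have hsq : ∀ t, θ t ^ 2 ≤ 1 := fun t => (sq_le_one_iff_abs_le_one _).2 (hθ t)
  have hi2 : Integrable (fun t => |θ t ^ 2 - M|) ρ := by
    refine Integrable.of_bound (C := 1 + |M|) (by fun_prop) ?_
    refine ae_of_all _ fun t => ?_
    rw [Real.norm_eq_abs, abs_abs]
    refine (abs_sub _ _).trans ?_
    rw [abs_of_nonneg (sq_nonneg _)]; linarith [hsq t]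
  have hc : (Real.exp (-((1 - M) * D / 2)) : ℂ)
      = ∫ t, (Real.exp (-((1 - M) * D / 2)) : ℂ) ∂ρ := by simp
  rw [hc, ← integral_sub hi1 (integrable_const _)]
  refine (norm_integral_le_integral_norm _).trans ?_
  have hR : 100 * n * r ^ 3 + D / 2 * ∫ t, |θ t ^ 2 - M| ∂ρ
      = ∫ t, (100 * n * r ^ 3 + D / 2 * |θ t ^ 2 - M|) ∂ρ := by
    rw [integral_add (integrable_const _) (hi2.const_mul _)]
    simp [integral_const_mul]
  rw [hR]
  refine integral_mono (hi1.sub (integrable_const _)).norm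
    ((integrable_const _).add (hi2.const_mul _)) fun t => ?_
  have h1 := condChar_bound d (θ t) r (hθ t) hr hd hsum
  have h2 : ‖(Real.exp (-((1 - θ t ^ 2) * D / 2)) : ℂ) - (Real.exp (-((1 - M) * D / 2)) : ℂ)‖
      ≤ D / 2 * |θ t ^ 2 - M| := by
    rw [← Complex.ofReal_sub, Complex.norm_real, Real.norm_eq_abs]
    refine (abs_exp_neg_sub_le (by nlinarith [hsq t]) (by nlinarith)).trans ?_
    have : (1 - θ t ^ 2) * D / 2 - (1 - M) * D / 2 = - (D / 2 * (θ t ^ 2 - M)) := by ring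
    rw [this, abs_neg, abs_mul, abs_of_nonneg (by positivity : 0 ≤ D / 2)]
  have := norm_sub_le_norm_sub_add_norm_sub (condChar d (θ t))
    (Real.exp (-((1 - θ t ^ 2) * D / 2)) : ℂ) (Real.exp (-((1 - M) * D / 2)) : ℂ)
  simp only at *
  linarith

/-! ### Integrals against the Ising measure -/

lemma isingWeight_pos {ι : Type*} [Fintype ι] (β : ℝ) (Q : Matrix ι ι ℝ) (z : ι → ℝ) :
    0 < isingWeight β Q z := Real.exp_pos _

lemma isingZ_pos (ι : Type*) [Fintype ι] [DecidableEq ι] (β : ℝ) (Q : Matrix ι ι ℝ) :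
    0 < isingZ ι β Q :=
  Finset.sum_pos (fun _ _ => isingWeight_pos _ _ _) Finset.univ_nonempty

instance isingMeasure_prob (ι : Type*) [Fintype ι] [DecidableEq ι] (β : ℝ) (Q : Matrix ι ι ℝ) :
    IsProbabilityMeasure (isingMeasure ι β Q) := by
  constructor
  simp only [isingMeasure, Measure.coe_finsetSum, Finset.sum_apply, Measure.smul_apply,
    measure_univ, smul_eq_mul, mul_one]
  rw [← ENNReal.ofReal_sum_of_nonneg
    (fun s _ => (div_pos (isingWeight_pos _ _ _) (isingZ_pos _ _ _)).le), ← Finset.sum_div]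
  rw [show ∑ s : ι → Bool, isingWeight β Q (pmVec s) = isingZ ι β Q from rfl,
    div_self (isingZ_pos ι β Q).ne', ENNReal.ofReal_one]

lemma integral_ising {ι : Type*} [Fintype ι] [DecidableEq ι] (β : ℝ) (Q : Matrix ι ι ℝ)
    (F : (ι → ℝ) → ℂ) :
    ∫ x, F x ∂(isingMeasure ι β Q)
      = ∑ s : ι → Bool, ((isingWeight β Q (pmVec s) / isingZ ι β Q : ℝ) : ℂ) * F (pmVec s) := by
  rw [isingMeasure, integral_finsetSum_measure]
  · refine Finset.sum_congr rfl fun s _ => ?_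
    rw [integral_smul_measure, integral_dirac, ENNReal.toReal_ofReal
      (div_pos (isingWeight_pos _ _ _) (isingZ_pos _ _ _)).le, Complex.real_smul]
  · intro s _
    refine Integrable.smul_measure ?_ ENNReal.ofReal_ne_top
    exact integrable_dirac (by simp)

lemma ising_ae {ι : Type*} [Fintype ι] [DecidableEq ι] (β : ℝ) (Q : Matrix ι ι ℝ) :
    ∀ᵐ x ∂(isingMeasure ι β Q), ∀ i, x i ^ 2 = 1 := by
  rw [isingMeasure, ← Measure.sum_fintype, Measure.ae_sum_iff]
  intro s
  refine Measure.ae_smul_measure ?_ _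
  rw [ae_dirac_iff]
  · intro i; unfold pmVec; split_ifs <;> norm_num
  · simp only [Set.ofPred_forall]
    exact MeasurableSet.iInter fun i => measurableSet_eq_fun (by fun_prop) (by fun_prop)

/-! ### The Curie-Weiss model as a mixture -/

lemma pmVec_sq {ι : Type*} (s : ι → Bool) (i : ι) : pmVec s i * pmVec s i = 1 := by
  unfold pmVec; split_ifs <;> norm_num

lemma isingWeight_QCW {n : ℕ} (hn : 0 < n) (β : ℝ) (s : Fin n → Bool) :
    isingWeight β (QCW n) (pmVec s)
      = Real.exp (-β / 2) * Real.exp (β * (∑ i, pmVec s i) ^ 2 / (2 * n)) := by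
  rw [isingWeight, ← Real.exp_add]
  congr 1
  have hn' : (n : ℝ) ≠ 0 := by positivity
  have h : ∀ i, (QCW n).mulVec (pmVec s) i = (n : ℝ)⁻¹ * ((∑ j, pmVec s j) - pmVec s i) := by
    intro i
    simp only [Matrix.mulVec, dotProduct, QCW]
    rw [mul_sub, Finset.mul_sum, ← Finset.sum_erase_eq_sub (Finset.mem_univ i),
      ← Finset.add_sum_erase _ _ (Finset.mem_univ i)]
    simp only [if_true, zero_mul, zero_add]
    refine Finset.sum_congr rfl fun j hj => ?_
    rw [if_neg (Finset.ne_of_mem_erase hj).symm]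
  simp only [dotProduct, h]
  have h2 : ∑ i, pmVec s i * ((n : ℝ)⁻¹ * ((∑ j, pmVec s j) - pmVec s i))
      = (n : ℝ)⁻¹ * ((∑ j, pmVec s j) ^ 2 - n) := by
    have : ∀ i, pmVec s i * ((n : ℝ)⁻¹ * ((∑ j, pmVec s j) - pmVec s i))
        = (n : ℝ)⁻¹ * (pmVec s i * (∑ j, pmVec s j)) - (n : ℝ)⁻¹ := by
      intro i
      have := pmVec_sq s i
      linear_combination (-(n : ℝ)⁻¹) * this
    simp only [this, Finset.sum_sub_distrib, ← Finset.mul_sum, ← Finset.sum_mul]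
    simp
    field_simp
  rw [h2]
  field_simp
  ring

/-- The profile function of the Curie-Weiss mixture. -/
def cwPsi (β t : ℝ) : ℝ := Real.cosh (β * t) * Real.exp (-(β * t ^ 2 / 2))

lemma sum_pm_prod {n : ℕ} (d : Fin n → ℝ) (h : ℝ) :
    ∑ s : Fin n → Bool, Complex.exp (h * ((∑ i, pmVec s i : ℝ) : ℂ)
        + Complex.I * ((∑ i, d i * pmVec s i : ℝ) : ℂ))
      = 2 ^ n * ((Real.cosh h : ℂ) ^ n * condChar d (Real.tanh h)) := by
  have h1 : ∀ s : Fin n → Bool, Complex.exp (h * ((∑ i, pmVec s i : ℝ) : ℂ)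
        + Complex.I * ((∑ i, d i * pmVec s i : ℝ) : ℂ))
      = ∏ i, (fun (i : Fin n) (b : Bool) => Complex.exp ((h + Complex.I * d i)
          * (if b then 1 else -1))) i (s i) := by
    intro s
    rw [← Complex.exp_sum]
    congr 1
    push_cast
    rw [Finset.mul_sum, Finset.mul_sum, ← Finset.sum_add_distrib]
    refine Finset.sum_congr rfl fun i _ => ?_
    unfold pmVec
    split_ifs <;> push_cast <;> ring
  simp only [h1]
  rw [← Fintype.prod_sum (fun (i : Fin n) (b : Bool) => Complex.exp ((h + Complex.I * d i)
          * (if b then 1 else -1)))]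
  have h2 : ∀ i : Fin n, ∑ b : Bool, Complex.exp ((h + Complex.I * d i) * (if b then 1 else -1))
      = (2 * Real.cosh h : ℂ) * ((Real.cos (d i) : ℂ)
        + Complex.I * (Real.tanh h : ℝ) * Real.sin (d i)) := by
    intro i
    have hc : (Complex.cosh h) ≠ 0 := by
      rw [← Complex.ofReal_cosh]; exact_mod_cast (Real.cosh_pos h).ne'
    have : Complex.exp (h + Complex.I * d i) + Complex.exp (-(h + Complex.I * d i))
        = 2 * Complex.cosh (h + d i * Complex.I) := by
      rw [Complex.two_cosh]; ring_nf
    simp only [Fintype.sum_bool, if_true, mul_one, mul_neg]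
    simp only [Bool.false_eq_true, if_false, mul_neg, mul_one]
    rw [this, Complex.cosh_add, Complex.cosh_mul_I, Complex.sinh_mul_I]
    push_cast
    rw [Complex.tanh_eq_sinh_div_cosh]
    field_simp
  simp only [h2]
  rw [Finset.prod_mul_distrib, condChar]
  simp [mul_pow]
  ring

lemma gauss_id {n : ℕ} (hn : 0 < n) {β : ℝ} (hβ : 0 < β) (S : ℝ) (e : ℂ) :
    Integrable (fun t : ℝ => (Real.exp (-(n * β / 2 * t ^ 2)) : ℂ)
        * Complex.exp ((β * t : ℝ) * (S : ℂ) + e)) ∧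
    ∫ t : ℝ, (Real.exp (-(n * β / 2 * t ^ 2)) : ℂ) * Complex.exp ((β * t : ℝ) * (S : ℂ) + e)
      = ((2 * Real.pi / (n * β) : ℂ) ^ (1 / 2 : ℂ))
          * ((Real.exp (β * S ^ 2 / (2 * n)) : ℂ) * Complex.exp e) := by
  have hn' : (0 : ℝ) < n := by exact_mod_cast hn
  have hb : (-((n * β / 2 : ℝ) : ℂ)).re < 0 := by
    rw [Complex.neg_re, Complex.ofReal_re]
    have : 0 < n * β / 2 := by positivity
    linarith
  have hfun : (fun t : ℝ => (Real.exp (-(n * β / 2 * t ^ 2)) : ℂ)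
        * Complex.exp ((β * t : ℝ) * (S : ℂ) + e))
      = fun t : ℝ => Complex.exp (-((n * β / 2 : ℝ) : ℂ) * t ^ 2 + ((β * S : ℝ) : ℂ) * t + e) := by
    funext t
    push_cast
    rw [← Complex.exp_add]
    ring_nf
  rw [hfun]
  refine ⟨integrable_cexp_quadratic' hb _ _, ?_⟩
  rw [integral_cexp_quadratic hb]
  have hnC : (n : ℂ) ≠ 0 := by exact_mod_cast hn'.ne'
  have hβC : (β : ℂ) ≠ 0 := by exact_mod_cast hβ.ne'
  congr 1
  · congr 1
    push_cast
    field_simp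
  · push_cast
    rw [← Complex.exp_add]
    congr 1
    push_cast
    field_simp
    ring

lemma cw_num {n : ℕ} (hn : 0 < n) {β : ℝ} (hβ : 0 < β) (d : Fin n → ℝ) :
    ((2 * Real.pi / (n * β) : ℂ) ^ (1 / 2 : ℂ)) *
      ∑ s : Fin n → Bool, ((isingWeight β (QCW n) (pmVec s) : ℝ) : ℂ)
        * Complex.exp (Complex.I * ((∑ i, d i * pmVec s i : ℝ) : ℂ))
      = (Real.exp (-β / 2) : ℂ) * 2 ^ n
        * ∫ t : ℝ, ((cwPsi β t ^ n : ℝ) : ℂ) * condChar d (Real.tanh (β * t)) := by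
  have h1 : ∀ t : ℝ, ((cwPsi β t ^ n : ℝ) : ℂ) * condChar d (Real.tanh (β * t)) * 2 ^ n
      = ∑ s : Fin n → Bool, (Real.exp (-(n * β / 2 * t ^ 2)) : ℂ) *
        Complex.exp ((β * t : ℝ) * ((∑ i, pmVec s i : ℝ) : ℂ)
        + Complex.I * ((∑ i, d i * pmVec s i : ℝ) : ℂ)) := by
    intro t
    rw [← Finset.mul_sum, sum_pm_prod, cwPsi, mul_pow, ← Real.exp_nat_mul]
    rw [show (n : ℝ) * -(β * t ^ 2 / 2) = -(n * β / 2 * t ^ 2) by ring]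
    push_cast
    ring
  have h2 : (∫ t : ℝ, ((cwPsi β t ^ n : ℝ) : ℂ) * condChar d (Real.tanh (β * t))) * 2 ^ n
      = ∑ s : Fin n → Bool, ((2 * Real.pi / (n * β) : ℂ) ^ (1 / 2 : ℂ))
          * ((Real.exp (β * (∑ i, pmVec s i) ^ 2 / (2 * n)) : ℂ)
            * Complex.exp (Complex.I * ((∑ i, d i * pmVec s i : ℝ) : ℂ))) := by
    rw [← integral_mul_const]
    simp only [h1]
    rw [integral_finsetSum _ (fun s _ => (gauss_id hn hβ _ _).1)]
    exact Finset.sum_congr rfl fun s _ => (gauss_id hn hβ _ _).2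
  rw [mul_assoc, mul_comm (2 ^ n : ℂ), h2, Finset.mul_sum, Finset.mul_sum]
  refine Finset.sum_congr rfl fun s _ => ?_
  rw [isingWeight_QCW hn]
  push_cast
  ring

lemma condChar_zero {n : ℕ} (θ : ℝ) : condChar (0 : Fin n → ℝ) θ = 1 := by
  simp [condChar]

lemma cw_char {n : ℕ} (hn : 0 < n) {β : ℝ} (hβ : 0 < β) (d : Fin n → ℝ) :
    ∫ y, Complex.exp (Complex.I * ((∑ i, d i * y i : ℝ) : ℂ)) ∂(isingMeasure (Fin n) β (QCW n))
      = (∫ t : ℝ, ((cwPsi β t ^ n : ℝ) : ℂ) * condChar d (Real.tanh (β * t)))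
        / ((∫ t : ℝ, cwPsi β t ^ n : ℝ) : ℂ) := by
  rw [integral_ising]
  have hA := cw_num hn hβ d
  have hB := cw_num hn hβ 0
  simp only [condChar_zero, Pi.zero_apply, zero_mul, Finset.sum_const_zero, Complex.ofReal_zero,
    mul_zero, Complex.exp_zero, mul_one] at hB
  rw [integral_complex_ofReal, ← Complex.ofReal_sum] at hB
  rw [show ∑ s : Fin n → Bool, isingWeight β (QCW n) (pmVec s) = isingZ (Fin n) β (QCW n)
    from rfl] at hB
  set K : ℂ := (2 * Real.pi / (n * β) : ℂ) ^ (1 / 2 : ℂ) with hK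
  have hK0 : K ≠ 0 := by
    rw [hK]
    have hn' : (0 : ℝ) < n := by exact_mod_cast hn
    have : (2 * Real.pi / (n * β) : ℂ) ≠ 0 := by
      have : (2 * Real.pi / (n * β) : ℝ) ≠ 0 := by positivity
      exact_mod_cast this
    rw [Ne, Complex.cpow_eq_zero_iff]
    exact fun h => this h.1
  have hZ : ((isingZ (Fin n) β (QCW n) : ℝ) : ℂ) ≠ 0 := by
    exact_mod_cast (isingZ_pos _ _ _).ne'
  have hE : (Real.exp (-β / 2) : ℂ) ≠ 0 := by exact_mod_cast (Real.exp_pos _).ne'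
  have hW : ((∫ t : ℝ, cwPsi β t ^ n : ℝ) : ℂ) ≠ 0 := by
    intro h0
    rw [h0, mul_zero] at hB
    exact (mul_ne_zero hK0 hZ) hB
  have hsum : ∑ s : Fin n → Bool, ((isingWeight β (QCW n) (pmVec s) / isingZ (Fin n) β (QCW n) : ℝ) : ℂ)
        * Complex.exp (Complex.I * ((∑ i, d i * pmVec s i : ℝ) : ℂ))
      = (∑ s : Fin n → Bool, ((isingWeight β (QCW n) (pmVec s) : ℝ) : ℂ)
        * Complex.exp (Complex.I * ((∑ i, d i * pmVec s i : ℝ) : ℂ)))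
        / ((isingZ (Fin n) β (QCW n) : ℝ) : ℂ) := by
    rw [Finset.sum_div]
    refine Finset.sum_congr rfl fun s _ => ?_
    push_cast
    ring
  rw [hsum, div_eq_div_iff hZ hW]
  have hc : K * ((Real.exp (-β / 2) : ℂ) * 2 ^ n) ≠ 0 :=
    mul_ne_zero hK0 (mul_ne_zero hE (pow_ne_zero _ two_ne_zero))
  refine mul_left_cancel₀ hc ?_
  linear_combination ((Real.exp (-β / 2) : ℂ) * 2 ^ n) * ((∫ t : ℝ, cwPsi β t ^ n : ℝ) : ℂ) * hA
    - ((Real.exp (-β / 2) : ℂ) * 2 ^ n) *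
      (∫ t : ℝ, ((cwPsi β t ^ n : ℝ) : ℂ) * condChar d (Real.tanh (β * t))) * hB

/-! ### Laplace asymptotics of the Curie-Weiss mixing measure -/

lemma hasDerivAt_tanh' (x : ℝ) : HasDerivAt Real.tanh (1 / Real.cosh x ^ 2) x := by
  have h : Real.tanh = fun y => Real.sinh y / Real.cosh y := by
    funext y; exact Real.tanh_eq_sinh_div_cosh y
  rw [h]
  have := (Real.hasDerivAt_sinh x).div (Real.hasDerivAt_cosh x) (Real.cosh_pos x).ne'
  refine this.congr_deriv ?_
  congr 1
  linarith [Real.cosh_sq_sub_sinh_sq x, sq (Real.cosh x), sq (Real.sinh x)]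

lemma continuous_tanh' : Continuous Real.tanh :=
  continuous_iff_continuousAt.2 fun x => (hasDerivAt_tanh' x).continuousAt

lemma strictConcave_tanh : StrictConcaveOn ℝ (Set.Ici 0) Real.tanh := by
  refine StrictAntiOn.strictConcaveOn_of_deriv (convex_Ici 0) continuous_tanh'.continuousOn ?_
  intro x hx y hy hxy
  rw [interior_Ici] at hx hy
  rw [(hasDerivAt_tanh' x).deriv, (hasDerivAt_tanh' y).deriv]
  have h : Real.cosh x < Real.cosh y :=
    Real.cosh_lt_cosh.2 (by rw [abs_of_pos hx, abs_of_pos hy]; exact hxy)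
  have := Real.cosh_pos x
  gcongr

lemma isingMag_mem (β : ℝ) :
    isingMag β ∈ {m : ℝ | 0 ≤ m ∧ m = Real.tanh (β * m)} := by
  refine IsClosed.csSup_mem ?_ ⟨0, by simp⟩ ⟨1, ?_⟩
  · refine isClosed_Ici.inter (isClosed_eq continuous_id ?_)
    exact continuous_tanh'.comp (by fun_prop)
  · rintro m ⟨_, hm⟩
    rw [hm]; exact (Real.tanh_lt_one _).le

lemma isingMag_nonneg (β : ℝ) : 0 ≤ isingMag β := (isingMag_mem β).1
lemma isingMag_eq (β : ℝ) : isingMag β = Real.tanh (β * isingMag β) := (isingMag_mem β).2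
lemma isingMag_sq_le (β : ℝ) : isingMag β ^ 2 ≤ 1 := by
  rw [isingMag_eq]; exact (Real.tanh_sq_lt_one _).le

lemma le_isingMag {β t : ℝ} (ht : 0 ≤ t) (h : t = Real.tanh (β * t)) : t ≤ isingMag β := by
  refine le_csSup ⟨1, ?_⟩ ⟨ht, h⟩
  rintro m ⟨_, hm⟩
  rw [hm]; exact (Real.tanh_lt_one _).le

lemma tanh_lt_of_gt {β t : ℝ} (ht : isingMag β < t) : Real.tanh (β * t) < t := by
  by_contra! hcon
  have ht0 : 0 ≤ t := (isingMag_nonneg β).trans ht.le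
  have ht1 : t ≤ 1 := hcon.trans (Real.tanh_lt_one _).le
  have hc : ContinuousOn (fun s => Real.tanh (β * s) - s) (Set.Icc t 1) :=
    ((continuous_tanh'.comp (by fun_prop)).sub continuous_id).continuousOn
  have : (0 : ℝ) ∈ Set.image (fun s => Real.tanh (β * s) - s) (Set.Icc t 1) :=
    intermediate_value_Icc' ht1 hc
      ⟨by linarith [Real.tanh_lt_one (β * 1)], by linarith⟩
  obtain ⟨s, hs, h0⟩ := this
  simp only at h0
  have := le_isingMag (β := β) (ht0.trans hs.1) (by linarith : s = Real.tanh (β * s))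
  linarith [hs.1]

lemma lt_tanh_of_lt {β t : ℝ} (hβ : 0 < β) (ht0 : 0 < t) (ht : t < isingMag β) :
    t < Real.tanh (β * t) := by
  set m := isingMag β with hm
  have hm0 : 0 < m := ht0.trans ht
  have hx : (0 : ℝ) ∈ Set.Ici (0 : ℝ) := by simp
  have hy : β * m ∈ Set.Ici (0 : ℝ) := by simp only [Set.mem_Ici]; positivity
  have ha : 0 < 1 - t / m := by rw [sub_pos, div_lt_one hm0]; exact ht
  have hb : 0 < t / m := by positivity
  have h := strictConcave_tanh.2 hx hy (by positivity) ha hb (by ring)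
  simp only [smul_eq_mul, mul_zero, Real.tanh_zero, zero_add] at h
  rw [hm, ← isingMag_eq, ← hm] at h
  rw [div_mul_cancel₀ _ hm0.ne', show t / m * (β * m) = β * t by field_simp] at h
  exact h

lemma cwPsi_pos (β t : ℝ) : 0 < cwPsi β t := mul_pos (Real.cosh_pos _) (Real.exp_pos _)

lemma cwPsi_abs (β t : ℝ) : cwPsi β |t| = cwPsi β t := by
  rcases abs_cases t with ⟨h, _⟩ | ⟨h, _⟩ <;> rw [h]
  simp [cwPsi]

lemma cwPsi_hasDerivAt (β t : ℝ) :
    HasDerivAt (cwPsi β) (cwPsi β t * (β * (Real.tanh (β * t) - t))) t := by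
  have h1 : HasDerivAt (fun s : ℝ => β * s) β t := by
    simpa using (hasDerivAt_id t).const_mul β
  have h2 : HasDerivAt (fun s : ℝ => -(β * s ^ 2 / 2)) (-(β * t)) t := by
    have := (((hasDerivAt_pow 2 t).const_mul β).div_const 2).neg
    refine this.congr_deriv ?_
    norm_num; ring
  have := h1.cosh.mul h2.exp
  refine this.congr_deriv ?_
  rw [cwPsi, Real.tanh_eq_sinh_div_cosh]
  have := (Real.cosh_pos (β * t)).ne'
  field_simp
  ring

lemma continuous_cwPsi (β : ℝ) : Continuous (cwPsi β) :=
  continuous_iff_continuousAt.2 fun x => (cwPsi_hasDerivAt β x).continuousAt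

lemma cwPsi_strictMono {β : ℝ} (hβ : 0 < β) : StrictMonoOn (cwPsi β) (Set.Icc 0 (isingMag β)) := by
  refine strictMonoOn_of_deriv_pos (convex_Icc _ _) (continuous_cwPsi β).continuousOn ?_
  intro t ht
  rw [interior_Icc] at ht
  rw [(cwPsi_hasDerivAt β t).deriv]
  have := lt_tanh_of_lt hβ ht.1 ht.2
  exact mul_pos (cwPsi_pos _ _) (mul_pos hβ (by linarith))

lemma cwPsi_strictAnti {β : ℝ} (hβ : 0 < β) : StrictAntiOn (cwPsi β) (Set.Ici (isingMag β)) := by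
  refine strictAntiOn_of_deriv_neg (convex_Ici _) (continuous_cwPsi β).continuousOn ?_
  intro t ht
  rw [interior_Ici] at ht
  rw [(cwPsi_hasDerivAt β t).deriv]
  have := tanh_lt_of_gt ht
  exact mul_neg_of_pos_of_neg (cwPsi_pos _ _) (mul_neg_of_pos_of_neg hβ (by linarith))

lemma cwPsi_le {β : ℝ} (hβ : 0 < β) (t : ℝ) : cwPsi β t ≤ cwPsi β (isingMag β) := by
  rw [← cwPsi_abs]
  rcases le_total |t| (isingMag β) with h | h
  · exact (cwPsi_strictMono hβ).monotoneOn ⟨abs_nonneg _, h⟩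
      ⟨isingMag_nonneg β, le_rfl⟩ h
  · exact (cwPsi_strictAnti hβ).antitoneOn (Set.mem_Ici.2 le_rfl) h h

lemma cwPsi_gap {β δ : ℝ} (hβ : 0 < β) (hδ : 0 < δ) :
    ∃ q, 0 < q ∧ q < cwPsi β (isingMag β) ∧ ∀ t, δ ≤ |(|t| - isingMag β)| → cwPsi β t ≤ q := by
  set m := isingMag β with hm
  have hm0 : 0 ≤ m := isingMag_nonneg β
  have hup : cwPsi β (m + δ) < cwPsi β m :=
    cwPsi_strictAnti hβ (Set.mem_Ici.2 le_rfl) (by simp only [Set.mem_Ici]; linarith) (by linarith)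
  have hupt : ∀ t, m + δ ≤ |t| → cwPsi β t ≤ cwPsi β (m + δ) := by
    intro t ht
    rw [← cwPsi_abs β t]
    exact (cwPsi_strictAnti hβ).antitoneOn (by simp only [Set.mem_Ici]; linarith)
      (by simp only [Set.mem_Ici]; linarith) ht
  by_cases hd : δ ≤ m
  · have hlo : cwPsi β (m - δ) < cwPsi β m :=
      cwPsi_strictMono hβ ⟨by linarith, by linarith⟩ ⟨hm0, le_rfl⟩ (by linarith)
    refine ⟨max (cwPsi β (m + δ)) (cwPsi β (m - δ)), lt_max_of_lt_left (cwPsi_pos _ _),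
      max_lt hup hlo, fun t ht => ?_⟩
    rcases le_abs.1 ht with h | h
    · exact (hupt t (by linarith)).trans (le_max_left _ _)
    · refine le_trans ?_ (le_max_right _ _)
      rw [← cwPsi_abs β t]
      exact (cwPsi_strictMono hβ).monotoneOn ⟨abs_nonneg _, by linarith⟩
        ⟨by linarith, by linarith⟩ (by linarith)
  · refine ⟨cwPsi β (m + δ), cwPsi_pos _ _, hup, fun t ht => ?_⟩
    rcases le_abs.1 ht with h | h
    · exact hupt t (by linarith)
    · exfalso; linarith [abs_nonneg t]

lemma cwPsi_integrable {β : ℝ} (hβ : 0 < β) : Integrable (cwPsi β) := by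
  have h : ∀ c : ℝ, Integrable (fun t : ℝ => Real.exp (-(β / 2 * t ^ 2) + c * t)) := by
    intro c
    have := (integrable_cexp_quadratic' (b := -((β / 2 : ℝ) : ℂ))
      (by rw [Complex.neg_re, Complex.ofReal_re]; linarith) (c : ℂ) 0).re
    refine this.congr (ae_of_all _ fun t => ?_)
    have e : (-((β / 2 : ℝ) : ℂ) * (t : ℂ) ^ 2 + (c : ℂ) * t + 0)
        = ((-(β / 2 * t ^ 2) + c * t : ℝ) : ℂ) := by push_cast; ring
    simp only [e, ← Complex.ofReal_exp]
    exact Complex.ofReal_re _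
  have h2 := ((h β).add (h (-β))).div_const 2
  refine h2.congr (ae_of_all _ fun t => ?_)
  simp only [Pi.add_apply, cwPsi, Real.cosh_eq, Real.exp_add]
  rw [show -(β * t ^ 2 / 2) = -(β / 2 * t ^ 2) by ring, show -β * t = -(β * t) by ring]
  ring

lemma cwPsi_pow_integrable {β : ℝ} (hβ : 0 < β) {n : ℕ} (hn : 0 < n) :
    Integrable (fun t => cwPsi β t ^ n) := by
  obtain ⟨k, rfl⟩ : ∃ k, n = k + 1 := ⟨n - 1, by omega⟩
  refine Integrable.mono' ((cwPsi_integrable hβ).const_mul (cwPsi β (isingMag β) ^ k))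
    ((continuous_cwPsi β).pow _).aestronglyMeasurable (ae_of_all _ fun t => ?_)
  rw [Real.norm_eq_abs, abs_of_pos (pow_pos (cwPsi_pos _ _) _), pow_succ]
  have := cwPsi_le hβ t
  have := cwPsi_pos β t
  gcongr

lemma cwPsi_pow_lower {β p : ℝ} (hβ : 0 < β) (hp0 : 0 < p) (hp : p < cwPsi β (isingMag β)) :
    ∃ η, 0 < η ∧ ∀ n : ℕ, 0 < n → η * p ^ n ≤ ∫ t, cwPsi β t ^ n := by
  have hev : ∀ᶠ t in 𝓝 (isingMag β), p < cwPsi β t :=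
    (continuous_cwPsi β).continuousAt.eventually (lt_mem_nhds hp)
  obtain ⟨η, hη, hball⟩ := Metric.eventually_nhds_iff_ball.1 hev
  refine ⟨2 * η, by linarith, fun n hn => ?_⟩
  have hI := cwPsi_pow_integrable hβ hn
  calc 2 * η * p ^ n = ∫ t in Metric.ball (isingMag β) η, p ^ n := by
        rw [setIntegral_const, Measure.real, Real.volume_ball, ENNReal.toReal_ofReal (by linarith),
          smul_eq_mul]
    _ ≤ ∫ t in Metric.ball (isingMag β) η, cwPsi β t ^ n := by
        refine setIntegral_mono_on ?_ hI.integrableOn measurableSet_ball fun t ht => ?_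
        · exact integrableOn_const (by rw [Real.volume_ball]; exact ENNReal.ofReal_ne_top)
        · exact pow_le_pow_left₀ hp0.le (hball t ht).le n
    _ ≤ ∫ t, cwPsi β t ^ n :=
        setIntegral_le_integral hI (ae_of_all _ fun t => (pow_pos (cwPsi_pos _ _) _).le)

lemma cwPsi_pow_integral_pos {β : ℝ} (hβ : 0 < β) {n : ℕ} (hn : 0 < n) :
    0 < ∫ t, cwPsi β t ^ n := by
  have hA := cwPsi_pos β (isingMag β)
  obtain ⟨η, hη, h⟩ := cwPsi_pow_lower hβ (p := cwPsi β (isingMag β) / 2) (by linarith)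
    (by linarith)
  exact lt_of_lt_of_le (by positivity) (h n hn)

/-- The deviation of the mixing measure. -/
def cwDev (β : ℝ) (n : ℕ) : ℝ :=
  (∫ t, cwPsi β t ^ n * |Real.tanh (β * t) ^ 2 - isingMag β ^ 2|) / ∫ t, cwPsi β t ^ n

lemma abs_sq_sub_le (β t : ℝ) : |Real.tanh (β * t) ^ 2 - isingMag β ^ 2| ≤ 1 := by
  have h1 := (Real.tanh_sq_lt_one (β * t)).le
  have h2 := isingMag_sq_le β
  rw [abs_le]
  constructor <;> nlinarith [sq_nonneg (Real.tanh (β * t)), sq_nonneg (isingMag β)]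

lemma cwDev_tendsto {β : ℝ} (hβ : 0 < β) : Tendsto (cwDev β) atTop (𝓝 0) := by
  have hnonneg : ∀ n, 0 ≤ cwDev β n := fun n =>
    div_nonneg (integral_nonneg fun t => mul_nonneg (pow_pos (cwPsi_pos _ _) _).le (abs_nonneg _))
      (integral_nonneg fun t => (pow_pos (cwPsi_pos _ _) _).le)
  have hcont : Continuous fun t => Real.tanh (β * t) ^ 2 :=
    (continuous_tanh'.comp (by fun_prop)).pow 2
  rw [Metric.tendsto_atTop']
  intro ε hε
  have hε2 : 0 < ε / 2 := by linarith
  obtain ⟨δ, hδ, hcl⟩ := Metric.continuousAt_iff.1 (hcont.continuousAt (x := isingMag β)) _ hε2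
  obtain ⟨q, hq0, hqA, hq⟩ := cwPsi_gap hβ hδ
  obtain ⟨p, hqp, hpA⟩ := exists_between hqA
  have hp0 := hq0.trans hqp
  obtain ⟨η, hη, hlow⟩ := cwPsi_pow_lower hβ hp0 hpA
  set W1 := ∫ t, cwPsi β t with hW1
  have hW10 : 0 ≤ W1 := integral_nonneg fun t => (cwPsi_pos _ _).le
  have hbound : ∀ k : ℕ, cwDev β (k + 1) ≤ ε / 2 + (q / p) ^ k * (W1 / (η * p)) := by
    intro k
    have hI := cwPsi_pow_integrable hβ (Nat.succ_pos k)
    have hWpos := cwPsi_pow_integral_pos hβ (Nat.succ_pos k)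
    have hpt : ∀ t, cwPsi β t ^ (k + 1) * |Real.tanh (β * t) ^ 2 - isingMag β ^ 2|
        ≤ ε / 2 * cwPsi β t ^ (k + 1) + q ^ k * cwPsi β t := by
      intro t
      have hpos := pow_pos (cwPsi_pos β t) (k + 1)
      have hpos1 := cwPsi_pos β t
      by_cases h : δ ≤ |(|t| - isingMag β)|
      · have h1 := hq t h
        have h2 := abs_sq_sub_le β t
        have h3 : cwPsi β t ^ (k + 1) ≤ q ^ k * cwPsi β t := by
          rw [pow_succ]; gcongr
        have h4 := mul_le_of_le_one_right hpos.le h2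
        nlinarith
      · push Not at h
        have h1 := hcl (x := |t|) (by rw [Real.dist_eq]; exact h)
        rw [Real.dist_eq, ← isingMag_eq] at h1
        have h2 : Real.tanh (β * |t|) ^ 2 = Real.tanh (β * t) ^ 2 := by
          rcases abs_cases t with ⟨h, _⟩ | ⟨h, _⟩ <;> rw [h]
          rw [mul_neg, Real.tanh_neg, neg_sq]
        rw [h2] at h1
        have : 0 < q ^ k * cwPsi β t := by positivity
        nlinarith
    have hnumer : ∫ t, cwPsi β t ^ (k + 1) * |Real.tanh (β * t) ^ 2 - isingMag β ^ 2|
        ≤ ε / 2 * (∫ t, cwPsi β t ^ (k + 1)) + q ^ k * W1 := by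
      rw [hW1, ← integral_const_mul, ← integral_const_mul, ← integral_add (hI.const_mul _)
        ((cwPsi_integrable hβ).const_mul _)]
      refine integral_mono_of_nonneg (ae_of_all _ fun t =>
        mul_nonneg (pow_pos (cwPsi_pos _ _) _).le (abs_nonneg _))
        ((hI.const_mul _).add ((cwPsi_integrable hβ).const_mul _)) (ae_of_all _ hpt)
    rw [cwDev, div_le_iff₀ hWpos]
    refine hnumer.trans ?_
    rw [add_mul]
    have h5 := hlow (k + 1) (Nat.succ_pos k)
    have h6 : q ^ k * W1 = (q / p) ^ k * (W1 / (η * p)) * (η * p ^ (k + 1)) := by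
      rw [div_pow, pow_succ]; field_simp
    have h7 : (q / p) ^ k * (W1 / (η * p)) * (η * p ^ (k + 1))
        ≤ (q / p) ^ k * (W1 / (η * p)) * ∫ t, cwPsi β t ^ (k + 1) := by gcongr
    linarith
  have hlim : Tendsto (fun k : ℕ => (q / p) ^ k * (W1 / (η * p))) atTop (𝓝 0) := by
    have := (tendsto_pow_atTop_nhds_zero_of_lt_one (r := q / p) (by positivity)
      ((div_lt_one hp0).2 hqp)).mul_const (W1 / (η * p))
    simpa using this
  obtain ⟨N, hN⟩ := (hlim.eventually (gt_mem_nhds hε2)).exists_forall_of_atTop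
  refine ⟨N + 1, fun n hn => ?_⟩
  obtain ⟨k, rfl⟩ : ∃ k, n = k + 1 := ⟨n - 1, by omega⟩
  rw [Real.dist_eq, sub_zero, abs_of_nonneg (hnonneg _)]
  have := hbound k
  have := hN k (by omega)
  linarith

/-- The mixing measure. -/
def cwMix (β : ℝ) (n : ℕ) : Measure ℝ :=
  volume.withDensity fun t => ENNReal.ofReal (cwPsi β t ^ n / ∫ t, cwPsi β t ^ n)

lemma cwMix_prob {β : ℝ} (hβ : 0 < β) {n : ℕ} (hn : 0 < n) :
    IsProbabilityMeasure (cwMix β n) := by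
  constructor
  have hW := cwPsi_pow_integral_pos hβ hn
  rw [cwMix, withDensity_apply _ MeasurableSet.univ, Measure.restrict_univ,
    ← ofReal_integral_eq_lintegral_ofReal ((cwPsi_pow_integrable hβ hn).div_const _)
      (ae_of_all _ fun t => (div_pos (pow_pos (cwPsi_pos _ _) _) hW).le),
    integral_div, div_self hW.ne', ENNReal.ofReal_one]

lemma integral_cwMix {E : Type*} [NormedAddCommGroup E] [NormedSpace ℝ E]
    {β : ℝ} (hβ : 0 < β) {n : ℕ} (hn : 0 < n) (f : ℝ → E) :
    ∫ t, f t ∂(cwMix β n) = ∫ t, (cwPsi β t ^ n / ∫ t, cwPsi β t ^ n) • f t := by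
  have hW := cwPsi_pow_integral_pos hβ hn
  rw [cwMix, integral_withDensity_eq_integral_toReal_smul]
  · refine integral_congr_ae (ae_of_all _ fun t => ?_)
    simp only
    rw [ENNReal.toReal_ofReal (div_pos (pow_pos (cwPsi_pos _ _) _) hW).le]
  · exact (((continuous_cwPsi β).pow n).div_const _).measurable.ennreal_ofReal
  · exact ae_of_all _ fun t => ENNReal.ofReal_lt_top

/-- Uniform approximation of the characteristic function of contrasts, positive temperature. -/
lemma cw_clt_pos {β : ℝ} (hβ : 0 < β) {n : ℕ} (hn : 0 < n) (d : Fin n → ℝ) (r : ℝ) (hr : r ≤ 1)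
    (hd : ∀ j, |d j| ≤ r) (hsum : ∑ j, d j = 0) :
    ‖∫ y, Complex.exp (Complex.I * ((∑ i, d i * y i : ℝ) : ℂ)) ∂(isingMeasure (Fin n) β (QCW n))
      - (Real.exp (-((1 - isingMag β ^ 2) * (∑ j, d j ^ 2) / 2)) : ℂ)‖
      ≤ 100 * n * r ^ 3 + (∑ j, d j ^ 2) / 2 * cwDev β n := by
  have := cwMix_prob hβ hn
  have h := mixture_bound (cwMix β n) (fun t => Real.tanh (β * t))
    (continuous_tanh'.comp (by fun_prop)) (fun t => (Real.abs_tanh_lt_one _).le) (isingMag β ^ 2)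
    (isingMag_sq_le β) d r hr hd hsum
  have e1 : ∫ t, condChar d (Real.tanh (β * t)) ∂(cwMix β n)
      = ∫ y, Complex.exp (Complex.I * ((∑ i, d i * y i : ℝ) : ℂ))
          ∂(isingMeasure (Fin n) β (QCW n)) := by
    rw [cw_char hn hβ, integral_cwMix hβ hn, ← integral_div]
    refine integral_congr_ae (ae_of_all _ fun t => ?_)
    simp only [Complex.real_smul]
    push_cast
    ring
  have e2 : ∫ t, |Real.tanh (β * t) ^ 2 - isingMag β ^ 2| ∂(cwMix β n) = cwDev β n := by
    rw [integral_cwMix hβ hn, cwDev, ← integral_div]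
    refine integral_congr_ae (ae_of_all _ fun t => ?_)
    simp only [smul_eq_mul]
    ring
  rw [e1, e2] at h
  exact h

lemma isingMag_zero : isingMag 0 = 0 := by
  have := isingMag_eq 0
  simpa using this

lemma cw_char_zero {n : ℕ} (hn : 0 < n) (d : Fin n → ℝ) :
    ∫ y, Complex.exp (Complex.I * ((∑ i, d i * y i : ℝ) : ℂ)) ∂(isingMeasure (Fin n) 0 (QCW n))
      = condChar d 0 := by
  rw [integral_ising]
  have hw : ∀ s : Fin n → Bool, isingWeight 0 (QCW n) (pmVec s) = 1 := by
    intro s; simp [isingWeight]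
  have hZ : isingZ (Fin n) 0 (QCW n) = 2 ^ n := by
    simp [isingZ, hw]
  have h := sum_pm_prod d 0
  simp only [Complex.ofReal_zero, zero_mul, zero_add, Real.cosh_zero, Complex.ofReal_one, one_pow,
    one_mul, Real.tanh_zero] at h
  simp only [hw, hZ]
  rw [← Finset.mul_sum, h]
  push_cast
  field_simp

/-- Uniform approximation of the characteristic function of contrasts. -/
lemma cw_clt {β : ℝ} (hβ : 0 ≤ β) : ∃ R : ℕ → ℝ, Tendsto R atTop (𝓝 0) ∧ (∀ n, 0 ≤ R n) ∧
    ∀ {n : ℕ} (_ : 0 < n) (d : Fin n → ℝ) (r : ℝ) (_ : r ≤ 1)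
    (_ : ∀ j, |d j| ≤ r) (_ : ∑ j, d j = 0),
    ‖∫ y, Complex.exp (Complex.I * ((∑ i, d i * y i : ℝ) : ℂ)) ∂(isingMeasure (Fin n) β (QCW n))
      - (Real.exp (-((1 - isingMag β ^ 2) * (∑ j, d j ^ 2) / 2)) : ℂ)‖
      ≤ 100 * n * r ^ 3 + (∑ j, d j ^ 2) / 2 * R n := by
  rcases hβ.eq_or_lt with rfl | hβ
  · refine ⟨fun _ => 0, tendsto_const_nhds, fun _ => le_rfl, ?_⟩
    intro n hn d r hr hd hsum
    rw [cw_char_zero hn, isingMag_zero, mul_zero, add_zero]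
    exact condChar_bound d 0 r (by simp) hr hd hsum
  · refine ⟨cwDev β, cwDev_tendsto hβ, fun n => ?_, ?_⟩
    · exact div_nonneg (integral_nonneg fun t =>
        mul_nonneg (pow_pos (cwPsi_pos _ _) _).le (abs_nonneg _))
        (integral_nonneg fun t => (pow_pos (cwPsi_pos _ _) _).le)
    · intro n hn d r hr hd hsum
      exact cw_clt_pos hβ hn d r hr hd hsum

/-! ### Sample statistics -/

lemma measurable_sampleMean {n : ℕ} : Measurable (fun x : Fin n → ℝ => sampleMean x) := by
  unfold sampleMean; fun_prop

lemma sum_centered {n : ℕ} (hn : 0 < n) (x : Fin n → ℝ) : ∑ i, (x i - sampleMean x) = 0 := by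
  have hn' : (n : ℝ) ≠ 0 := by positivity
  rw [Finset.sum_sub_distrib]
  simp [sampleMean]
  field_simp
  simp

lemma sampleVar_eq {n : ℕ} (hn : 0 < n) (x : Fin n → ℝ) (hx : ∀ i, x i ^ 2 = 1) :
    (∑ i, (x i - sampleMean x) ^ 2) / (n : ℝ) = 1 - sampleMean x ^ 2 := by
  have hn' : (n : ℝ) ≠ 0 := by positivity
  have hs : ∑ i, x i = n * sampleMean x := by
    simp only [sampleMean, Fintype.card_fin]; field_simp
  have h : ∀ i, (x i - sampleMean x) ^ 2 = 1 - 2 * sampleMean x * x i + sampleMean x ^ 2 := by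
    intro i
    linear_combination hx i
  simp only [h, Finset.sum_add_distrib, Finset.sum_sub_distrib, ← Finset.mul_sum, hs]
  simp
  field_simp
  ring

lemma sampleMean_sq_le {n : ℕ} (hn : 0 < n) (x : Fin n → ℝ) (hx : ∀ i, x i ^ 2 = 1) :
    sampleMean x ^ 2 ≤ 1 := by
  have h := sampleVar_eq hn x hx
  have : 0 ≤ (∑ i, (x i - sampleMean x) ^ 2) / (n : ℝ) :=
    div_nonneg (Finset.sum_nonneg fun _ _ => sq_nonneg _) (by positivity)
  linarith

lemma sqrt_mul_sampleCov {n : ℕ} (hn : 0 < n) (u : ℝ) (x y : Fin n → ℝ) :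
    u * (Real.sqrt n * sampleCov x y) = ∑ i, (u * (x i - sampleMean x) / Real.sqrt n) * y i := by
  have hn' : (0 : ℝ) < n := by exact_mod_cast hn
  have hsq : Real.sqrt n ≠ 0 := (Real.sqrt_pos.2 hn').ne'
  have h1 : ∑ i, (x i - sampleMean x) * (y i - sampleMean y)
      = ∑ i, (x i - sampleMean x) * y i := by
    simp only [mul_sub _ _ (sampleMean y), Finset.sum_sub_distrib, ← Finset.sum_mul,
      sum_centered hn x]
    simp
  have h2 : ∑ i, (u * (x i - sampleMean x) / Real.sqrt n) * y i
      = u / Real.sqrt n * ∑ i, (x i - sampleMean x) * y i := by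
    rw [Finset.mul_sum]
    exact Finset.sum_congr rfl fun i _ => by ring
  rw [h2, sampleCov, h1, Fintype.card_fin]
  have h3 : (n : ℝ) = Real.sqrt n * Real.sqrt n := (Real.mul_self_sqrt hn'.le).symm
  generalize ∑ i, (x i - sampleMean x) * y i = A
  have h4 : A / (n : ℝ) = A / (Real.sqrt n * Real.sqrt n) := by rw [← h3]
  rw [h4]
  field_simp

lemma l1_of_prob (β₁ : ℝ) (Q : (n : ℕ) → Matrix (Fin n) (Fin n) ℝ) (m₁ : ℝ)
    (hm₁ : 0 ≤ m₁) (hm₁' : m₁ < 1)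
    (hmeansq : TendstoInProbability
      (fun n => Measure.map (fun x : Fin n → ℝ => sampleMean x ^ 2)
        (isingMeasure (Fin n) β₁ (Q n))) (m₁ ^ 2)) :
    Tendsto (fun n => ∫ x, |sampleMean x ^ 2 - m₁ ^ 2| ∂(isingMeasure (Fin n) β₁ (Q n)))
      atTop (𝓝 0) := by
  rw [Metric.tendsto_atTop']
  intro ε hε
  have hε2 : 0 < ε / 2 := by linarith
  have h := hmeansq (ε / 2) hε2
  have hev := (ENNReal.tendsto_nhds_zero.1 h) (ENNReal.ofReal (ε / 4))
    (ENNReal.ofReal_pos.2 (by linarith))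
  obtain ⟨N, hN⟩ := hev.exists_forall_of_atTop
  refine ⟨N, fun n hn => ?_⟩
  have hn0 : 0 < n := by omega
  have hb := hN n (by omega)
  set μ := isingMeasure (Fin n) β₁ (Q n) with hμ
  have hmeas : Measurable (fun x : Fin n → ℝ => sampleMean x ^ 2) := measurable_sampleMean.pow_const 2
  have hS : MeasurableSet {v : ℝ | ε / 2 ≤ |v - m₁ ^ 2|} :=
    measurableSet_le measurable_const (by fun_prop)
  rw [Measure.map_apply hmeas hS] at hb
  set S := (fun x : Fin n → ℝ => sampleMean x ^ 2) ⁻¹' {v : ℝ | ε / 2 ≤ |v - m₁ ^ 2|} with hSdef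
  have hSm : MeasurableSet S := hmeas hS
  have hreal : μ.real S ≤ ε / 4 := ENNReal.toReal_le_of_le_ofReal (by linarith) hb
  have hpt : ∀ᵐ x ∂μ, |sampleMean x ^ 2 - m₁ ^ 2| ≤ ε / 2 + S.indicator (fun _ => (1 : ℝ)) x := by
    filter_upwards [ising_ae β₁ (Q n)] with x hx
    by_cases hxS : x ∈ S
    · rw [Set.indicator_of_mem hxS]
      have := sampleMean_sq_le hn0 x hx
      have : |sampleMean x ^ 2 - m₁ ^ 2| ≤ 1 := by
        rw [abs_le]; constructor <;> nlinarith [sq_nonneg (sampleMean x)]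
      linarith
    · rw [Set.indicator_of_notMem hxS]
      have : ¬ (ε / 2 ≤ |sampleMean x ^ 2 - m₁ ^ 2|) := hxS
      linarith
  have hI : Integrable (S.indicator (fun _ => (1 : ℝ))) μ :=
    (integrable_const (1 : ℝ)).indicator hSm
  have hle := integral_mono_of_nonneg (ae_of_all _ fun x => abs_nonneg _)
    ((integrable_const (ε / 2)).add hI) hpt
  simp only [Pi.add_apply] at hle
  rw [integral_add (integrable_const _) hI, integral_indicator_const _ hSm] at hle
  simp only [integral_const, probReal_univ, smul_eq_mul, one_mul, mul_one] at hle
  rw [Real.dist_eq, sub_zero, abs_of_nonneg (integral_nonneg fun x => abs_nonneg _)]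
  linarith

lemma inner_bound {β₂ : ℝ} {R : ℕ → ℝ} (hR0 : ∀ n, 0 ≤ R n)
    (hR : ∀ {n : ℕ} (_ : 0 < n) (d : Fin n → ℝ) (r : ℝ) (_ : r ≤ 1)
      (_ : ∀ j, |d j| ≤ r) (_ : ∑ j, d j = 0),
      ‖∫ y, Complex.exp (Complex.I * ((∑ i, d i * y i : ℝ) : ℂ))
          ∂(isingMeasure (Fin n) β₂ (QCW n))
        - (Real.exp (-((1 - isingMag β₂ ^ 2) * (∑ j, d j ^ 2) / 2)) : ℂ)‖
        ≤ 100 * n * r ^ 3 + (∑ j, d j ^ 2) / 2 * R n)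
    {n : ℕ} (hn : 0 < n) (u m₁ : ℝ) (hm₁ : 0 ≤ m₁) (hm₁' : m₁ < 1)
    (hr : 2 * |u| / Real.sqrt n ≤ 1) (x : Fin n → ℝ) (hx : ∀ i, x i ^ 2 = 1) :
    ‖∫ y, Complex.exp (u * ((Real.sqrt n * sampleCov x y : ℝ) : ℂ) * Complex.I)
          ∂(isingMeasure (Fin n) β₂ (QCW n))
        - (Real.exp (-((1 - m₁ ^ 2) * (1 - isingMag β₂ ^ 2) * u ^ 2 / 2)) : ℂ)‖
      ≤ 800 * |u| ^ 3 / Real.sqrt n + u ^ 2 / 2 * R n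
        + u ^ 2 / 2 * |sampleMean x ^ 2 - m₁ ^ 2| := by
  have hn' : (0 : ℝ) < n := by exact_mod_cast hn
  have hs0 : 0 < Real.sqrt n := Real.sqrt_pos.2 hn'
  have hss : Real.sqrt n ^ 2 = n := Real.sq_sqrt hn'.le
  have hmean := sampleMean_sq_le hn x hx
  have hmag := isingMag_sq_le β₂
  set d : Fin n → ℝ := fun i => u * (x i - sampleMean x) / Real.sqrt n with hd
  have hfun : ∀ y : Fin n → ℝ,
      Complex.exp (u * ((Real.sqrt n * sampleCov x y : ℝ) : ℂ) * Complex.I)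
      = Complex.exp (Complex.I * ((∑ i, d i * y i : ℝ) : ℂ)) := by
    intro y
    rw [← sqrt_mul_sampleCov hn u x y]
    push_cast
    ring_nf
  have hdsum : ∑ i, d i = 0 := by
    simp only [hd, ← Finset.sum_div, ← Finset.mul_sum, sum_centered hn x]
    simp
  have hdsq : ∑ i, d i ^ 2 = u ^ 2 * (1 - sampleMean x ^ 2) := by
    rw [← sampleVar_eq hn x hx, mul_div_assoc', Finset.mul_sum, Finset.sum_div]
    refine Finset.sum_congr rfl fun i _ => ?_
    rw [hd]
    simp only
    rw [div_pow, hss, mul_pow]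
  have hdle : ∀ i, |d i| ≤ 2 * |u| / Real.sqrt n := by
    intro i
    rw [hd]
    simp only
    rw [abs_div, abs_mul, abs_of_pos hs0]
    have h1 : |x i| ≤ 1 := abs_le_one_iff_mul_self_le_one.2 (by nlinarith [hx i])
    have h2 : |sampleMean x| ≤ 1 := abs_le_one_iff_mul_self_le_one.2 (by nlinarith)
    have h3 : |x i - sampleMean x| ≤ 2 := (abs_sub _ _).trans (by linarith)
    rw [mul_comm 2]
    gcongr
  have h := hR hn d _ hr hdle hdsum
  simp only [hfun]
  rw [hdsq] at h
  have e1 : 100 * (n : ℝ) * (2 * |u| / Real.sqrt n) ^ 3 = 800 * |u| ^ 3 / Real.sqrt n := by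
    have : (n : ℝ) * (2 * |u| / Real.sqrt n) ^ 3 = 8 * |u| ^ 3 / Real.sqrt n := by
      nth_rewrite 1 [← hss]
      field_simp
      ring
    rw [mul_assoc, this]; ring
  rw [e1] at h
  have e2 : u ^ 2 * (1 - sampleMean x ^ 2) / 2 * R n ≤ u ^ 2 / 2 * R n := by
    have := hR0 n
    refine mul_le_mul_of_nonneg_right ?_ this
    nlinarith [sq_nonneg u, sq_nonneg (sampleMean x), mul_nonneg (sq_nonneg u) (sq_nonneg (sampleMean x))]
  have e3 : ‖(Real.exp (-((1 - isingMag β₂ ^ 2) * (u ^ 2 * (1 - sampleMean x ^ 2)) / 2)) : ℂ)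
      - (Real.exp (-((1 - m₁ ^ 2) * (1 - isingMag β₂ ^ 2) * u ^ 2 / 2)) : ℂ)‖
      ≤ u ^ 2 / 2 * |sampleMean x ^ 2 - m₁ ^ 2| := by
    rw [← Complex.ofReal_sub, Complex.norm_real, Real.norm_eq_abs]
    have p1 : 0 ≤ 1 - isingMag β₂ ^ 2 := by linarith
    have p2 : 0 ≤ 1 - sampleMean x ^ 2 := by linarith
    have p3 : 0 ≤ 1 - m₁ ^ 2 := by nlinarith
    refine (abs_exp_neg_sub_le (by positivity) (by positivity)).trans ?_
    have : (1 - isingMag β₂ ^ 2) * (u ^ 2 * (1 - sampleMean x ^ 2)) / 2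
        - (1 - m₁ ^ 2) * (1 - isingMag β₂ ^ 2) * u ^ 2 / 2
        = - ((1 - isingMag β₂ ^ 2) * (u ^ 2 / 2) * (sampleMean x ^ 2 - m₁ ^ 2)) := by ring
    rw [this, abs_neg, abs_mul, abs_of_nonneg (by positivity : 0 ≤ (1 - isingMag β₂ ^ 2) * (u ^ 2 / 2))]
    refine mul_le_mul_of_nonneg_right ?_ (abs_nonneg _)
    exact mul_le_of_le_one_left (by positivity) (by nlinarith [sq_nonneg (isingMag β₂)])
  have := norm_sub_le_norm_sub_add_norm_sub
    (∫ y, Complex.exp (Complex.I * ((∑ i, d i * y i : ℝ) : ℂ)) ∂(isingMeasure (Fin n) β₂ (QCW n)))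
    (Real.exp (-((1 - isingMag β₂ ^ 2) * (u ^ 2 * (1 - sampleMean x ^ 2)) / 2)) : ℂ)
    (Real.exp (-((1 - m₁ ^ 2) * (1 - isingMag β₂ ^ 2) * u ^ 2 / 2)) : ℂ)
  linarith

lemma measurable_cov {n : ℕ} : Measurable
    (fun p : (Fin n → ℝ) × (Fin n → ℝ) => Real.sqrt n * sampleCov p.1 p.2) := by
  unfold sampleCov sampleMean
  fun_prop

lemma charFun_tendsto (β₁ β₂ : ℝ) (hβ₂ : 0 ≤ β₂)
    (Q : (n : ℕ) → Matrix (Fin n) (Fin n) ℝ)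
    (m₁ : ℝ) (hm₁ : 0 ≤ m₁) (hm₁' : m₁ < 1)
    (hmeansq : TendstoInProbability
      (fun n => Measure.map (fun x : Fin n → ℝ => sampleMean x ^ 2)
        (isingMeasure (Fin n) β₁ (Q n)))
      (m₁ ^ 2)) (u : ℝ) :
    Tendsto (fun n => charFun (Measure.map
        (fun p : (Fin n → ℝ) × (Fin n → ℝ) => Real.sqrt n * sampleCov p.1 p.2)
        ((isingMeasure (Fin n) β₁ (Q n)).prod (isingMeasure (Fin n) β₂ (QCW n)))) u) atTop
      (𝓝 (Real.exp (-((1 - m₁ ^ 2) * (1 - isingMag β₂ ^ 2) * u ^ 2 / 2)) : ℂ)) := by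
  obtain ⟨R, hRt, hR0, hR⟩ := cw_clt hβ₂
  have hL1 := l1_of_prob β₁ Q m₁ hm₁ hm₁' hmeansq
  have hsqrt : Tendsto (fun n : ℕ => Real.sqrt n) atTop atTop :=
    Real.tendsto_sqrt_atTop.comp tendsto_natCast_atTop_atTop
  rw [tendsto_iff_norm_sub_tendsto_zero]
  have hB : Tendsto (fun n : ℕ => 800 * |u| ^ 3 / Real.sqrt n + u ^ 2 / 2 * R n
      + u ^ 2 / 2 * ∫ x, |sampleMean x ^ 2 - m₁ ^ 2| ∂(isingMeasure (Fin n) β₁ (Q n)))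
      atTop (𝓝 0) := by
    have := ((hsqrt.const_div_atTop (800 * |u| ^ 3)).add (hRt.const_mul (u ^ 2 / 2))).add
      (hL1.const_mul (u ^ 2 / 2))
    simpa using this
  have hrt : ∀ᶠ n : ℕ in atTop, 2 * |u| / Real.sqrt n ≤ 1 := by
    have := (hsqrt.const_div_atTop (2 * |u|)).eventually (gt_mem_nhds zero_lt_one)
    exact this.mono fun n hn => le_of_lt hn
  refine squeeze_zero' (Eventually.of_forall fun _ => norm_nonneg _) ?_ hB
  filter_upwards [hrt, eventually_gt_atTop 0] with n hr hn
  set μ := isingMeasure (Fin n) β₁ (Q n) with hμ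
  set ν := isingMeasure (Fin n) β₂ (QCW n) with hν
  set L : ℂ := (Real.exp (-((1 - m₁ ^ 2) * (1 - isingMag β₂ ^ 2) * u ^ 2 / 2)) : ℂ) with hL
  set F : (Fin n → ℝ) × (Fin n → ℝ) → ℂ := fun p =>
    Complex.exp (u * ((Real.sqrt n * sampleCov p.1 p.2 : ℝ) : ℂ) * Complex.I) with hF
  have hFm : Measurable F := by
    have h := measurable_cov (n := n)
    have h2 : Measurable fun v : ℝ => Complex.exp (u * (v : ℂ) * Complex.I) := by fun_prop
    exact h2.comp h
  have hFi : Integrable F (μ.prod ν) := by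
    refine Integrable.of_bound (C := 1) hFm.aestronglyMeasurable (ae_of_all _ fun p => ?_)
    rw [hF]
    simp only
    rw [← Complex.ofReal_mul, Complex.norm_exp_ofReal_mul_I]
  have hchar : charFun (Measure.map
        (fun p : (Fin n → ℝ) × (Fin n → ℝ) => Real.sqrt n * sampleCov p.1 p.2) (μ.prod ν)) u
      = ∫ x, ∫ y, F (x, y) ∂ν ∂μ := by
    rw [charFun_apply_real, integral_map measurable_cov.aemeasurable, ← integral_prod _ hFi]
    exact (by fun_prop : Continuous fun v : ℝ =>
      Complex.exp (u * (v : ℂ) * Complex.I)).aestronglyMeasurable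
  have hcL : L = ∫ x, L ∂μ := by simp
  have hI1 : Integrable (fun x => ∫ y, F (x, y) ∂ν) μ := hFi.integral_prod_left
  have habs : Integrable (fun x : Fin n → ℝ => |sampleMean x ^ 2 - m₁ ^ 2|) μ := by
    refine Integrable.of_bound (C := 1)
      (((measurable_sampleMean.pow_const 2).sub_const _).abs).aestronglyMeasurable ?_
    filter_upwards [ising_ae β₁ (Q n)] with x hx
    have := sampleMean_sq_le hn x hx
    rw [Real.norm_eq_abs, abs_abs, abs_le]
    constructor <;> nlinarith [sq_nonneg (sampleMean x)]
  rw [hchar, hcL, ← integral_sub hI1 (integrable_const _)]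
  refine (norm_integral_le_integral_norm _).trans ?_
  have hRHS : 800 * |u| ^ 3 / Real.sqrt n + u ^ 2 / 2 * R n
      + u ^ 2 / 2 * ∫ x, |sampleMean x ^ 2 - m₁ ^ 2| ∂μ
      = ∫ x, (800 * |u| ^ 3 / Real.sqrt n + u ^ 2 / 2 * R n
      + u ^ 2 / 2 * |sampleMean x ^ 2 - m₁ ^ 2|) ∂μ := by
    rw [integral_add (integrable_const _) (habs.const_mul _), integral_const_mul, integral_const]
    simp
  rw [hRHS]
  refine integral_mono_ae (hI1.sub (integrable_const _)).norm
    ((integrable_const _).add (habs.const_mul _)) ?_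
  filter_upwards [ising_ae β₁ (Q n)] with x hx
  exact inner_bound hR0 hR hn u m₁ hm₁ hm₁' hr x hx

/-- **(General `X`, Curie–Weiss `Y`).** If `X ~ P_{β₁,Qₙ}` satisfies `X̄ₙ² → m₁²` in
probability (`m₁ ∈ [0,1)`) and `Y ~ P_{β₂,Q^{CW}}` is an independent Curie–Weiss vector, then
`(1/n) Σᵢ (Xᵢ - X̄ₙ)² → 1 - m₁²` in probability and
`√n Tₙ →d N(0, (1-m₁²)(1-m(β₂)²))`. -/
theorem general_X_curieWeiss_Y_clt (β₁ β₂ : ℝ) (hβ₁ : 0 ≤ β₁) (hβ₂ : 0 ≤ β₂)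
    (Q : (n : ℕ) → Matrix (Fin n) (Fin n) ℝ)
    (hsym : ∀ n, (Q n).IsSymm) (hdiag : ∀ n i, Q n i i = 0)
    (m₁ : ℝ) (hm₁ : 0 ≤ m₁) (hm₁' : m₁ < 1)
    (hmeansq : TendstoInProbability
      (fun n => Measure.map (fun x : Fin n → ℝ => sampleMean x ^ 2)
        (isingMeasure (Fin n) β₁ (Q n)))
      (m₁ ^ 2)) :
    TendstoInProbability
      (fun n => Measure.map (fun x : Fin n → ℝ => (∑ i, (x i - sampleMean x) ^ 2) / (n : ℝ))
        (isingMeasure (Fin n) β₁ (Q n)))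
      (1 - m₁ ^ 2) ∧
    TendstoInDistribution
      (fun n => Measure.map
        (fun p : (Fin n → ℝ) × (Fin n → ℝ) => Real.sqrt n * sampleCov p.1 p.2)
        ((isingMeasure (Fin n) β₁ (Q n)).prod (isingMeasure (Fin n) β₂ (QCW n))))
      (gaussianReal 0 (Real.toNNReal ((1 - m₁ ^ 2) * (1 - isingMag β₂ ^ 2)))) := by
  constructor
  · intro ε hε
    refine (hmeansq ε hε).congr' ?_
    filter_upwards [eventually_gt_atTop 0] with n hn
    have hS1 : MeasurableSet {v : ℝ | ε ≤ |v - m₁ ^ 2|} :=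
      measurableSet_le measurable_const (by fun_prop)
    have hS2 : MeasurableSet {v : ℝ | ε ≤ |v - (1 - m₁ ^ 2)|} :=
      measurableSet_le measurable_const (by fun_prop)
    have hm2 : Measurable (fun x : Fin n → ℝ => (∑ i, (x i - sampleMean x) ^ 2) / (n : ℝ)) := by
      unfold sampleMean; fun_prop
    rw [Measure.map_apply (measurable_sampleMean.pow_const 2) hS1, Measure.map_apply hm2 hS2]
    refine measure_congr ?_
    filter_upwards [ising_ae β₁ (Q n)] with x hx
    refine propext ?_
    change ε ≤ |sampleMean x ^ 2 - m₁ ^ 2|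
      ↔ ε ≤ |(∑ i, (x i - sampleMean x) ^ 2) / (n : ℝ) - (1 - m₁ ^ 2)|
    rw [sampleVar_eq hn x hx, abs_sub_comm]
    ring_nf
  · intro f
    have hP : ∀ n, IsProbabilityMeasure (Measure.map
        (fun p : (Fin n → ℝ) × (Fin n → ℝ) => Real.sqrt n * sampleCov p.1 p.2)
        ((isingMeasure (Fin n) β₁ (Q n)).prod (isingMeasure (Fin n) β₂ (QCW n)))) :=
      fun n => Measure.isProbabilityMeasure_map measurable_cov.aemeasurable
    let P : ℕ → ProbabilityMeasure ℝ := fun n => ⟨_, hP n⟩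
    let G : ProbabilityMeasure ℝ :=
      ⟨gaussianReal 0 (Real.toNNReal ((1 - m₁ ^ 2) * (1 - isingMag β₂ ^ 2))), inferInstance⟩
    have hconv : Tendsto P atTop (𝓝 G) := by
      refine ProbabilityMeasure.tendsto_iff_tendsto_charFun.2 fun u => ?_
      have h := charFun_tendsto β₁ β₂ hβ₂ Q m₁ hm₁ hm₁' hmeansq u
      have hG : charFun (G : Measure ℝ) u
          = (Real.exp (-((1 - m₁ ^ 2) * (1 - isingMag β₂ ^ 2) * u ^ 2 / 2)) : ℂ) := by
        change charFun (gaussianReal 0 _) u = _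
        have hv : 0 ≤ (1 - m₁ ^ 2) * (1 - isingMag β₂ ^ 2) :=
          mul_nonneg (by nlinarith) (by linarith [isingMag_sq_le β₂])
        rw [charFun_gaussianReal, Real.coe_toNNReal _ hv]
        push_cast
        congr 1
        ring
      rw [hG]
      exact h
    exact ProbabilityMeasure.tendsto_iff_forall_integral_tendsto.1 hconv f

end
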